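/- Let x be a nonzero element of H and let y be a nonzero element of Ĥ(x). If R_A(y) > r_{S_u}(x^{(0)}), then σ_{S_u}(y) = {λ ∈ ℂ : |λ| ≤ r_{S_u}(x^{(0)})}. -/

import Mathlib

open Filter Topology ENNReal

noncomputable section

/-- The local resolvent set of `T` at `x`. -/
def localResolventSet {E : Type*} [NormedAddCommGroup E] [NormedSpace ℂ E]
    (T : E →L[ℂ] E) (x : E) : Set ℂ :=
  {l : ℂ | ∃ U : Set ℂ, IsOpen U ∧ l ∈ U ∧ ∃ f : ℂ → E, AnalyticOnNhd ℂ f U ∧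
    ∀ m ∈ U, T (f m) - m • f m = x}

/-- The local spectrum of `T` at `x`. -/
def localSpectrum {E : Type*} [NormedAddCommGroup E] [NormedSpace ℂ E]
    (T : E →L[ℂ] E) (x : E) : Set ℂ :=
  (localResolventSet T x)ᶜ

/-- The local spectral radius of `T` at `x`: `limsup ‖Tⁿx‖^{1/n}`. -/
def localSpecRad {E : Type*} [NormedAddCommGroup E] [NormedSpace ℂ E]
    (T : E →L[ℂ] E) (x : E) : ℝ≥0∞ :=
  limsup (fun n : ℕ => (‖(T ^ n) x‖₊ : ℝ≥0∞) ^ (1 / n : ℝ)) atTop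

/-- The lower bound `m(T) = inf {‖Tx‖ : ‖x‖ = 1}` of an operator. -/
def lowerBound {E : Type*} [NormedAddCommGroup E] [NormedSpace ℂ E]
    (T : E →L[ℂ] E) : ℝ :=
  sInf ((fun x => ‖T x‖) '' {x : E | ‖x‖ = 1})

/-- `r₁(T) = lim m(Tⁿ)^{1/n} = sup_{n ≥ 1} m(Tⁿ)^{1/n}`. -/
def r1 {E : Type*} [NormedAddCommGroup E] [NormedSpace ℂ E]
    (T : E →L[ℂ] E) : ℝ≥0∞ :=
  ⨆ n : ℕ, ENNReal.ofReal (lowerBound (T ^ (n + 1))) ^ (1 / (n + 1) : ℝ)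

/-- The point spectrum: the set of eigenvalues. -/
def pointSpectrum {E : Type*} [NormedAddCommGroup E] [NormedSpace ℂ E]
    (T : E →L[ℂ] E) : Set ℂ :=
  {l : ℂ | ∃ x : E, x ≠ 0 ∧ T x = l • x}

/-- The set of points where `T` fails the single-valued extension property. -/
def svepFails {E : Type*} [NormedAddCommGroup E] [NormedSpace ℂ E]
    (T : E →L[ℂ] E) : Set ℂ :=
  {l₀ : ℂ | ¬ ∀ r : ℝ, 0 < r → ∀ f : ℂ → E, AnalyticOnNhd ℂ f (Metric.ball l₀ r) →
      (∀ m ∈ Metric.ball l₀ r, T (f m) - m • f m = 0) →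
      ∀ m ∈ Metric.ball l₀ r, f m = 0}

/-- Dunford's condition (C). -/
def DunfordC {E : Type*} [NormedAddCommGroup E] [NormedSpace ℂ E]
    (T : E →L[ℂ] E) : Prop :=
  ∀ F : Set ℂ, IsClosed F → IsClosed {y : E | localSpectrum T y ⊆ F}

/-- Bishop's property (β). -/
def BishopBeta {E : Type*} [NormedAddCommGroup E] [NormedSpace ℂ E]
    (T : E →L[ℂ] E) : Prop :=
  ∀ U : Set ℂ, IsOpen U → ∀ f : ℕ → ℂ → E,
    (∀ m, AnalyticOnNhd ℂ (f m) U) →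
    TendstoLocallyUniformlyOn (fun m z => T (f m z) - z • f m z) 0 atTop U →
    TendstoLocallyUniformlyOn f 0 atTop U

section Shift

variable {H : Type*} [NormedAddCommGroup H] [InnerProductSpace ℂ H] [CompleteSpace H]

/-- `wB A n = B_n = A_{n-1} ⋯ A_1 A_0`, with `B_0 = 1`. -/
def wB (A : ℕ → (H →L[ℂ] H)ˣ) : ℕ → (H →L[ℂ] H)ˣ
  | 0 => 1
  | n + 1 => A n * wB A n

/-- `wBi A n = B_n⁻¹` as an operator. -/
def wBi (A : ℕ → (H →L[ℂ] H)ˣ) (n : ℕ) : H →L[ℂ] H :=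
  (((wB A n)⁻¹ : (H →L[ℂ] H)ˣ) : H →L[ℂ] H)

/-- `R₂⁺(S_u) = sup_{x ≠ 0} 1 / limsup ‖(B_n*)⁻¹ x‖^{1/n}` (with `1/0 = ∞`). -/
def R2plus (A : ℕ → (H →L[ℂ] H)ˣ) : ℝ≥0∞ :=
  ⨆ (x : H) (_ : x ≠ 0),
    (limsup (fun n : ℕ =>
      (‖ContinuousLinearMap.adjoint (wBi A n) x‖₊ : ℝ≥0∞) ^ (1 / n : ℝ)) atTop)⁻¹

/-- `R₂⁻(S_u) = inf_{x ≠ 0} 1 / limsup ‖(B_n*)⁻¹ x‖^{1/n}` (with `1/0 = ∞`). -/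
def R2minus (A : ℕ → (H →L[ℂ] H)ˣ) : ℝ≥0∞ :=
  ⨅ (x : H) (_ : x ≠ 0),
    (limsup (fun n : ℕ =>
      (‖ContinuousLinearMap.adjoint (wBi A n) x‖₊ : ℝ≥0∞) ^ (1 / n : ℝ)) atTop)⁻¹

/-- `R₃⁺(S_u) = sup_{x ≠ 0} limsup ‖B_n x‖^{1/n}`. -/
def R3plus (A : ℕ → (H →L[ℂ] H)ˣ) : ℝ≥0∞ :=
  ⨆ (x : H) (_ : x ≠ 0),
    limsup (fun n : ℕ => (‖(wB A n : H →L[ℂ] H) x‖₊ : ℝ≥0∞) ^ (1 / n : ℝ)) atTop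

/-- `R₃⁻(S_u) = inf_{x ≠ 0} limsup ‖B_n x‖^{1/n}`. -/
def R3minus (A : ℕ → (H →L[ℂ] H)ˣ) : ℝ≥0∞ :=
  ⨅ (x : H) (_ : x ≠ 0),
    limsup (fun n : ℕ => (‖(wB A n : H →L[ℂ] H) x‖₊ : ℝ≥0∞) ^ (1 / n : ℝ)) atTop

/-- `r₂(S_u) = 1 / limsup ‖B_n⁻¹‖^{1/n}` (with `1/0 = ∞`). -/
def r2 (A : ℕ → (H →L[ℂ] H)ˣ) : ℝ≥0∞ :=
  (limsup (fun n : ℕ => (‖wBi A n‖₊ : ℝ≥0∞) ^ (1 / n : ℝ)) atTop)⁻¹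

/-- `r₃(S_u) = 1 / liminf ‖B_n⁻¹‖^{1/n}` (with `1/0 = ∞`). -/
def r3 (A : ℕ → (H →L[ℂ] H)ˣ) : ℝ≥0∞ :=
  (liminf (fun n : ℕ => (‖wBi A n‖₊ : ℝ≥0∞) ^ (1 / n : ℝ)) atTop)⁻¹

/-- `R_𝒜(x) = 1 / limsup ‖B_n⁻¹ x_n‖^{1/n}` (with `1/0 = ∞`). -/
def RA (A : ℕ → (H →L[ℂ] H)ˣ) (x : lp (fun _ : ℕ => H) 2) : ℝ≥0∞ :=
  (limsup (fun n : ℕ => (‖wBi A n (x n)‖₊ : ℝ≥0∞) ^ (1 / n : ℝ)) atTop)⁻¹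

end Shift

/-!
Write `v n = B_n x` and let `r` be the local spectral radius of `S` at `x⁽⁰⁾`. Every `y ∈ Ĥ(x)` has
coordinates `a n • v n`, and `R_A(y)` is the radius of convergence of `F(z) = ∑ a n zⁿ`. Since
this exceeds `r`, one has `y = ∑ a n Sⁿ x⁽⁰⁾`, so the local spectral radius at `y` is at most `r`
and the Neumann series solves the local resolvent equation for `|λ| > r`.

Conversely, if `(S - μ) f = y`, then comparing coordinates gives
`μ ^ (n + 1) f n = -(∑ k ≤ n, a k μ ^ k) v n`. Where `F(μ) ≠ 0` this forces `‖v n‖ = O(|μ|ⁿ)`, that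
is, `|μ| ≥ r`. A local resolvent near a point of the closed disc of radius `r > 0` would thus make
`F` vanish on a nonempty open set, hence identically. For `r = 0`, a vector with a local resolvent
at `0` lies in the range of every power of `S`, and the intersection of these ranges is trivial.
-/

theorem mem_closure_eball_zero {E : Type*} [SeminormedAddCommGroup E] [NormedSpace ℝ E] {r : ℝ≥0∞}
    (hr : r ≠ 0) {x : E} (hx : ‖x‖ₑ ≤ r) : x ∈ closure (Metric.eball 0 r) := by
  induction r with
  | top => exact subset_closure (by simp)
  | coe r =>
    rw [Metric.eball_coe, closure_ball 0 (by simpa using hr), mem_closedBall_zero_iff]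
    exact_mod_cast hx

section GeneratingSeries

variable {𝕜 E : Type*} [NontriviallyNormedField 𝕜] [NormedAddCommGroup E] [NormedSpace 𝕜 E]

variable (𝕜) in
/-- The power series `∑ zⁿ • u n` in one variable `z : 𝕜` with vector coefficients `u n`. It is the
vehicle for the Cauchy–Hadamard theorem: both `localSpecRad` and `RA` are expressed through
radii of convergence of such series. -/
def generatingSeries (u : ℕ → E) : FormalMultilinearSeries 𝕜 𝕜 E :=
  fun n => ContinuousMultilinearMap.mkPiRing 𝕜 (Fin n) (u n)

theorem norm_generatingSeries (u : ℕ → E) (n : ℕ) : ‖generatingSeries 𝕜 u n‖ = ‖u n‖ :=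
  ContinuousMultilinearMap.norm_mkPiRing _

@[simp]
theorem generatingSeries_coeff (u : ℕ → E) (n : ℕ) : (generatingSeries 𝕜 u).coeff n = u n := by
  simp [generatingSeries, FormalMultilinearSeries.coeff]

theorem generatingSeries_radius_inv (u : ℕ → E) :
    (generatingSeries 𝕜 u).radius⁻¹ =
      limsup (fun n : ℕ => (‖u n‖₊ : ℝ≥0∞) ^ (1 / n : ℝ)) atTop := by
  rw [FormalMultilinearSeries.radius_inv_eq_limsup]
  refine limsup_congr (Eventually.of_forall fun n => ?_)
  rw [ENNReal.coe_rpow_of_nonneg _ (by positivity)]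
  congr 3
  exact NNReal.eq (norm_generatingSeries u n)

theorem generatingSeries_radius_inv_le_of_eventually_norm_le {u : ℕ → E} {s : NNReal} {C : ℝ}
    (h : ∀ᶠ n in atTop, ‖u n‖ ≤ C * s ^ n) : (generatingSeries 𝕜 u).radius⁻¹ ≤ s := by
  rw [ENNReal.inv_le_iff_inv_le]
  refine ENNReal.le_of_forall_nnreal_lt fun q hq => ?_
  have hsq : (s * q : ℝ) ≤ 1 := by
    rw [mul_comm]
    exact_mod_cast ENNReal.le_inv_iff_mul_le.1 hq.le
  refine FormalMultilinearSeries.le_radius_of_eventually_le _ |C| ?_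
  filter_upwards [h] with n hn
  calc ‖generatingSeries 𝕜 u n‖ * (q : ℝ) ^ n ≤ C * s ^ n * q ^ n := by
        rw [norm_generatingSeries]
        gcongr
    _ = C * (s * q) ^ n := by rw [mul_pow, mul_assoc]
    _ ≤ |C| * 1 := by
        gcongr
        · exact le_abs_self C
        · exact pow_le_one₀ (by positivity) hsq
    _ = |C| := mul_one _

theorem exists_norm_le_of_generatingSeries_radius_inv_lt {u : ℕ → E} {s : NNReal}
    (h : (generatingSeries 𝕜 u).radius⁻¹ < s) : ∃ C : ℝ, ∀ n, ‖u n‖ ≤ C * s ^ n := by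
  have hs : 0 < s := ENNReal.coe_pos.1 (zero_le.trans_lt h)
  have hs' : ((s⁻¹ : NNReal) : ℝ≥0∞) < (generatingSeries 𝕜 u).radius := by
    rwa [ENNReal.coe_inv hs.ne', ENNReal.inv_lt_iff_inv_lt]
  obtain ⟨C, -, hbound⟩ := FormalMultilinearSeries.norm_mul_pow_le_of_lt_radius _ hs'
  refine ⟨C, fun n => ?_⟩
  rw [← mul_inv_le_iff₀ (by positivity)]
  simpa only [norm_generatingSeries, NNReal.coe_inv, inv_pow] using hbound n

theorem radius_eq_of_norm_eq {𝕜' F G F' G' : Type*} [NontriviallyNormedField 𝕜']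
    [NormedAddCommGroup F] [NormedSpace 𝕜 F] [NormedAddCommGroup G] [NormedSpace 𝕜 G]
    [NormedAddCommGroup F'] [NormedSpace 𝕜' F'] [NormedAddCommGroup G'] [NormedSpace 𝕜' G']
    {p : FormalMultilinearSeries 𝕜 F G} {q : FormalMultilinearSeries 𝕜' F' G'}
    (h : ∀ n, ‖p n‖ = ‖q n‖) : p.radius = q.radius :=
  le_antisymm (FormalMultilinearSeries.radius_le_of_le fun n => (h n).ge)
    (FormalMultilinearSeries.radius_le_of_le fun n => (h n).le)

theorem generatingSeries_radius_smul_const (a : ℕ → 𝕜) {x : E} (hx : x ≠ 0) :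
    (generatingSeries 𝕜 fun n => a n • x).radius = (generatingSeries 𝕜 a).radius := by
  have hnorm : ∀ n, ‖generatingSeries 𝕜 (fun n => a n • x) n‖ =
      ‖(‖x‖ • generatingSeries ℝ fun n => ‖a n‖) n‖ := fun n => by
    rw [FormalMultilinearSeries.smul_apply, norm_smul, norm_generatingSeries,
      norm_generatingSeries, norm_smul, norm_norm, norm_norm, mul_comm]
  calc (generatingSeries 𝕜 fun n => a n • x).radius
      = (‖x‖ • generatingSeries ℝ fun n => ‖a n‖).radius := radius_eq_of_norm_eq hnorm
    _ = (generatingSeries ℝ fun n => ‖a n‖).radius :=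
      FormalMultilinearSeries.radius_smul_eq _ (norm_ne_zero_iff.2 hx)
    _ = (generatingSeries 𝕜 a).radius :=
      radius_eq_of_norm_eq fun n => by simp only [norm_generatingSeries, norm_norm]

theorem generatingSeries_hasSum [CompleteSpace E] (u : ℕ → E) {z : 𝕜}
    (hz : z ∈ Metric.eball 0 (generatingSeries 𝕜 u).radius) :
    HasSum (fun n => z ^ n • u n) ((generatingSeries 𝕜 u).sum z) := by
  simpa using (generatingSeries 𝕜 u).hasSum hz

theorem eq_zero_of_generatingSeries_sum_eqOn_zero {𝕜 : Type*} [RCLike 𝕜] [NormedSpace 𝕜 E]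
    [CompleteSpace E] {u : ℕ → E} {V : Set 𝕜} (hV : IsOpen V) (hne : V.Nonempty)
    (hVr : V ⊆ Metric.eball 0 (generatingSeries 𝕜 u).radius)
    (hzero : ∀ z ∈ V, (generatingSeries 𝕜 u).sum z = 0) : u = 0 := by
  obtain ⟨w, hw⟩ := hne
  have hpos : 0 < (generatingSeries 𝕜 u).radius := Metric.pos_of_mem_eball (hVr hw)
  have hsum := (generatingSeries 𝕜 u).hasFPowerSeriesOnBall hpos
  have hball := hsum.analyticOnNhd.eqOn_zero_of_preconnected_of_eventuallyEq_zero
    (convex_eball 0 _).isPreconnected (hVr hw) (eventually_of_mem (hV.mem_nhds hw) hzero)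
  have hseries : generatingSeries 𝕜 u = 0 := hsum.hasFPowerSeriesAt.eq_zero_of_eventually
    (eventually_of_mem (Metric.eball_mem_nhds 0 hpos) hball)
  funext n
  rw [← generatingSeries_coeff (𝕜 := 𝕜) u n, hseries]
  rfl

end GeneratingSeries

section LocalSpectrum

variable {E : Type*} [NormedAddCommGroup E] [NormedSpace ℂ E] {T : E →L[ℂ] E} {x y : E}

theorem localSpecRad_eq_generatingSeries_radius_inv (T : E →L[ℂ] E) (x : E) :
    localSpecRad T x = (generatingSeries ℂ fun n => (T ^ n) x).radius⁻¹ :=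
  (generatingSeries_radius_inv _).symm

theorem exists_norm_pow_apply_le_of_localSpecRad_lt {s : NNReal} (h : localSpecRad T x < s) :
    ∃ C : ℝ, ∀ n, ‖(T ^ n) x‖ ≤ C * s ^ n :=
  exists_norm_le_of_generatingSeries_radius_inv_lt
    ((localSpecRad_eq_generatingSeries_radius_inv T x).symm.trans_lt h)

theorem localSpecRad_le_of_eventually_norm_pow_apply_le {s : NNReal} {C : ℝ}
    (h : ∀ᶠ n in atTop, ‖(T ^ n) x‖ ≤ C * s ^ n) : localSpecRad T x ≤ s :=
  (localSpecRad_eq_generatingSeries_radius_inv T x).trans_le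
    (generatingSeries_radius_inv_le_of_eventually_norm_le h)

theorem generatingSeries_pow_apply_sum_eq [CompleteSpace E] {z : ℂ}
    (hz : z ∈ Metric.eball 0 (generatingSeries ℂ fun n => (T ^ n) x).radius) :
    (generatingSeries ℂ fun n => (T ^ n) x).sum z =
      x + z • T ((generatingSeries ℂ fun n => (T ^ n) x).sum z) := by
  have hsum := generatingSeries_hasSum _ hz
  have hshift : HasSum (fun n => z ^ (n + 1) • (T ^ (n + 1)) x)
      (z • T ((generatingSeries ℂ fun n => (T ^ n) x).sum z)) := by
    convert (T.hasSum hsum).const_smul z using 2 with n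
    rw [map_smul, smul_smul, pow_succ', pow_succ', mul_apply_eq_comp]
  have hsplit := HasSum.zero_add (f := fun n => z ^ n • (T ^ n) x) hshift
  rw [pow_zero, pow_zero, one_smul, one_apply_eq_self] at hsplit
  exact hsum.unique hsplit

theorem mem_localResolventSet_of_localSpecRad_lt [CompleteSpace E] {l : ℂ}
    (hl : localSpecRad T x < ‖l‖₊) : l ∈ localResolventSet T x := by
  set p := generatingSeries ℂ fun n => (T ^ n) x
  have hU : IsOpen {m : ℂ | localSpecRad T x < ‖m‖₊} :=
    isOpen_lt continuous_const (by fun_prop)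
  have hne : ∀ m : ℂ, localSpecRad T x < ‖m‖₊ → m ≠ 0 := by
    rintro _ hm rfl
    simp at hm
  have hball : ∀ m : ℂ, localSpecRad T x < ‖m‖₊ → m⁻¹ ∈ Metric.eball 0 p.radius := by
    intro m hm
    rw [Metric.mem_eball, edist_zero_right, enorm_inv (hne m hm), ENNReal.inv_lt_iff_inv_lt]
    rwa [localSpecRad_eq_generatingSeries_radius_inv] at hm
  refine ⟨_, hU, hl, fun m => -(m⁻¹ • p.sum m⁻¹), fun m hm => ?_, fun m hm => ?_⟩
  · have hinv : AnalyticAt ℂ (fun m : ℂ => m⁻¹) m := analyticAt_inv (hne m hm)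
    have hsum : AnalyticAt ℂ p.sum m⁻¹ :=
      (p.hasFPowerSeriesOnBall (zero_le.trans_lt (hball m hm))).analyticOnNhd _ (hball m hm)
    exact (hinv.smul (hsum.comp hinv)).neg
  · have hsum : p.sum m⁻¹ = x + m⁻¹ • T (p.sum m⁻¹) :=
      generatingSeries_pow_apply_sum_eq (hball m hm)
    rw [map_neg, map_smul, smul_neg, smul_inv_smul₀ (hne m hm), sub_neg_eq_add, neg_add_eq_sub,
      sub_eq_iff_eq_add]
    exact hsum

section ScalarSeries

variable {a : ℕ → ℂ}

theorem summable_smul_pow_apply [CompleteSpace E]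
    (h : localSpecRad T x < (generatingSeries ℂ a).radius) :
    Summable fun k => a k • (T ^ k) x := by
  obtain ⟨s, hxs, hsa⟩ := ENNReal.lt_iff_exists_nnreal_btwn.1 h
  obtain ⟨C, hC⟩ := exists_norm_pow_apply_le_of_localSpecRad_lt hxs
  refine .of_norm_bounded (((generatingSeries ℂ a).summable_norm_mul_pow hsa).mul_left C)
    fun k => ?_
  calc ‖a k • (T ^ k) x‖ ≤ ‖a k‖ * (C * s ^ k) := by
        rw [norm_smul]
        gcongr
        exact hC k
    _ = C * (‖generatingSeries ℂ a k‖ * s ^ k) := by rw [norm_generatingSeries]; ring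

theorem localSpecRad_le_of_hasSum_smul_pow_apply
    (h : localSpecRad T x < (generatingSeries ℂ a).radius)
    (hy : HasSum (fun k => a k • (T ^ k) x) y) : localSpecRad T y ≤ localSpecRad T x := by
  refine le_of_forall_gt_imp_ge_of_dense fun q hq => ?_
  obtain ⟨s, hxs, hs⟩ := ENNReal.lt_iff_exists_nnreal_btwn.1 (lt_min hq h)
  obtain ⟨hsq, hsa⟩ := lt_min_iff.1 hs
  obtain ⟨C, hC⟩ := exists_norm_pow_apply_le_of_localSpecRad_lt hxs
  have hmajorant := (generatingSeries ℂ a).summable_norm_mul_pow hsa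
  refine (localSpecRad_le_of_eventually_norm_pow_apply_le
    (C := C * ∑' k, ‖generatingSeries ℂ a k‖ * s ^ k) (.of_forall fun n => ?_)).trans hsq.le
  rw [← ((T ^ n).hasSum hy).tsum_eq]
  refine (tsum_of_norm_bounded (hmajorant.hasSum.mul_left (C * s ^ n)) fun k => ?_).trans_eq
    (by ring)
  calc ‖(T ^ n) (a k • (T ^ k) x)‖ = ‖a k‖ * ‖(T ^ (n + k)) x‖ := by
        rw [map_smul, norm_smul, pow_add, mul_apply_eq_comp]
    _ ≤ ‖a k‖ * (C * s ^ (n + k)) := by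
        gcongr
        exact hC (n + k)
    _ = C * s ^ n * (‖generatingSeries ℂ a k‖ * s ^ k) := by rw [norm_generatingSeries]; ring

end ScalarSeries

/-- For a local resolvent `f` of `T` at `x` near `l`, take `z = f l`: the divided difference of `f`
at `l` is a local resolvent at `z`. -/
theorem exists_sub_smul_eq_of_mem_localResolventSet [CompleteSpace E] {l : ℂ}
    (hl : l ∈ localResolventSet T x) : ∃ z, T z - l • z = x ∧ l ∈ localResolventSet T z := by
  obtain ⟨U, hU, hlU, f, hf, hfx⟩ := hl
  have hg : AnalyticOnNhd ℂ (dslope f l) U :=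
    ((Complex.differentiableOn_dslope (hU.mem_nhds hlU)).2 hf.differentiableOn).analyticOnNhd hU
  have hne : ∀ m ∈ U, m ≠ l → T (dslope f l m) - m • dslope f l m = f l := by
    intro m hm hml
    refine smul_right_injective E (sub_ne_zero.2 hml) ?_
    calc (m - l) • (T (dslope f l m) - m • dslope f l m)
        = T (f m - f l) - m • (f m - f l) := by
          rw [smul_sub, smul_comm _ m, ← map_smul, sub_smul_dslope]
      _ = (T (f m) - m • f m) - (T (f l) - l • f l) + (m - l) • f l := by
          rw [map_sub, smul_sub, sub_smul]
          abel
      _ = (m - l) • f l := by rw [hfx m hm, hfx l hlU, sub_self, zero_add]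
  have hslope : ContinuousAt (dslope f l) l := (hg l hlU).continuousAt
  have hcont : ContinuousAt (fun m => T (dslope f l m) - m • dslope f l m) l := by fun_prop
  have heq : T (dslope f l l) - l • dslope f l l = f l :=
    tendsto_nhds_unique_of_eventuallyEq (hcont.tendsto.mono_left nhdsWithin_le_nhds)
      tendsto_const_nhds (eventually_nhdsWithin_iff.2 ((hU.eventually_mem hlU).mono hne) :
        (fun m => T (dslope f l m) - m • dslope f l m) =ᶠ[𝓝[≠] l] fun _ => f l)
  refine ⟨f l, hfx l hlU, U, hU, hlU, dslope f l, hg, fun m hm => ?_⟩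
  obtain rfl | hml := eq_or_ne m l
  exacts [heq, hne m hm hml]

theorem exists_pow_sub_smul_apply_eq_of_mem_localResolventSet [CompleteSpace E] {l : ℂ} (n : ℕ)
    (hl : l ∈ localResolventSet T x) : ∃ z, ((T - l • 1) ^ n) z = x := by
  induction n generalizing x with
  | zero => exact ⟨x, rfl⟩
  | succ n ih =>
    obtain ⟨z, hzx, hz⟩ := exists_sub_smul_eq_of_mem_localResolventSet hl
    obtain ⟨w, rfl⟩ := ih hz
    exact ⟨w, by simpa [pow_succ'] using hzx⟩

end LocalSpectrum

section WeightedShift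

variable {E : ℕ → Type*} [∀ n, NormedAddCommGroup (E n)] [∀ n, NormedSpace ℂ (E n)]
  {p : ℝ≥0∞} [Fact (1 ≤ p)] {A : ∀ n, E n →L[ℂ] E (n + 1)} {S : lp E p →L[ℂ] lp E p}

/-- `S` is the unilateral shift on the `ℓᵖ`-sum of the spaces `E n` whose weights are the operators
`A n : E n → E (n + 1)`. A predicate, so that boundedness of the weights is part of the existence
of `S`. -/
structure IsWeightedShift (A : ∀ n, E n →L[ℂ] E (n + 1)) (S : lp E p →L[ℂ] lp E p) : Prop where
  apply_zero : ∀ x, S x 0 = 0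
  apply_succ : ∀ x n, S x (n + 1) = A n (x n)

namespace IsWeightedShift

theorem apply_single (hS : IsWeightedShift A S) (n : ℕ) (x : E n) :
    S (lp.single p n x) = lp.single p (n + 1) (A n x) := by
  ext k
  cases k with
  | zero => rw [hS.apply_zero, lp.single_apply_ne _ _ _ (Nat.succ_ne_zero n).symm]
  | succ k =>
    rw [hS.apply_succ]
    obtain rfl | hkn := eq_or_ne k n
    · rw [lp.single_apply_self, lp.single_apply_self]
    · rw [lp.single_apply_ne _ _ _ hkn, lp.single_apply_ne _ _ _ (by simpa using hkn), map_zero]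

theorem pow_apply_eq_zero (hS : IsWeightedShift A S) (x : lp E p) {n k : ℕ} (hk : k < n) :
    (S ^ n) x k = 0 := by
  induction n generalizing k with
  | zero => exact absurd hk k.not_lt_zero
  | succ n ih =>
    rw [pow_succ', mul_apply_eq_comp]
    cases k with
    | zero => exact hS.apply_zero _
    | succ k => rw [hS.apply_succ, ih (Nat.succ_lt_succ_iff.1 hk), map_zero]

theorem zero_mem_localSpectrum [∀ n, CompleteSpace (E n)] (hS : IsWeightedShift A S) {y : lp E p}
    (hy : y ≠ 0) : 0 ∈ localSpectrum S y := by
  intro h0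
  refine hy (lp.ext (funext fun k => ?_))
  obtain ⟨z, hz⟩ := exists_pow_sub_smul_apply_eq_of_mem_localResolventSet (k + 1) h0
  rw [zero_smul, sub_zero] at hz
  exact hz ▸ hS.pow_apply_eq_zero z k.lt_succ_self

variable {v : ∀ n, E n}

theorem pow_apply_single_zero (hS : IsWeightedShift A S) (hv : ∀ n, v (n + 1) = A n (v n))
    (n : ℕ) : (S ^ n) (lp.single p 0 (v 0)) = lp.single p n (v n) := by
  induction n with
  | zero => rfl
  | succ n ih => rw [pow_succ', mul_apply_eq_comp, ih, hS.apply_single, hv]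

theorem norm_pow_apply_single_zero (hS : IsWeightedShift A S) (hv : ∀ n, v (n + 1) = A n (v n))
    (n : ℕ) : ‖(S ^ n) (lp.single p 0 (v 0))‖ = ‖v n‖ := by
  rw [hS.pow_apply_single_zero hv, lp.norm_single (zero_lt_one.trans_le Fact.out)]

variable {a : ℕ → ℂ} {y : lp E p}

theorem hasSum_smul_pow_apply_single_zero [∀ n, CompleteSpace (E n)] (hS : IsWeightedShift A S)
    (hv : ∀ n, v (n + 1) = A n (v n)) (hy : ∀ n, y n = a n • v n)
    (hr : localSpecRad S (lp.single p 0 (v 0)) < (generatingSeries ℂ a).radius) :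
    HasSum (fun k => a k • (S ^ k) (lp.single p 0 (v 0))) y := by
  have hsum := (summable_smul_pow_apply hr).hasSum
  convert hsum
  ext n
  have hterm : ∀ k, lp.evalCLM ℂ E p n (a k • (S ^ k) (lp.single p 0 (v 0))) =
      a k • lp.single p k (v k) n := fun k => by
    rw [map_smul, hS.pow_apply_single_zero hv]
    rfl
  have hcoord := (lp.evalCLM ℂ E p n).hasSum hsum
  simp_rw [hterm] at hcoord
  refine (hy n).trans (HasSum.unique ?_ hcoord)
  convert hasSum_single n fun k hkn => ?_ using 1
  · rw [lp.single_apply_self]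
  · rw [lp.single_apply_ne _ _ _ hkn.symm, smul_zero]

theorem pow_succ_smul_apply_eq (hS : IsWeightedShift A S) (hv : ∀ n, v (n + 1) = A n (v n))
    (hy : ∀ n, y n = a n • v n) {m : ℂ} {g : lp E p} (hg : S g - m • g = y) (n : ℕ) :
    m ^ (n + 1) • g n = -((∑ k ∈ Finset.range (n + 1), m ^ k • a k) • v n) := by
  have hcoord : ∀ n, m • g n = S g n - a n • v n := fun n => by
    rw [← hy, ← hg]
    exact (_root_.sub_sub_cancel (S g n) (m • g n)).symm
  induction n with
  | zero => simpa [hS.apply_zero] using hcoord 0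
  | succ n ih =>
    calc m ^ (n + 2) • g (n + 1) = m ^ (n + 1) • (m • g (n + 1)) := by rw [pow_succ, mul_smul]
      _ = A n (m ^ (n + 1) • g n) - (m ^ (n + 1) * a (n + 1)) • v (n + 1) := by
        rw [hcoord, hS.apply_succ, smul_sub, map_smul, mul_smul]
      _ = -((∑ k ∈ Finset.range (n + 2), m ^ k • a k) • v (n + 1)) := by
        rw [ih, map_neg, map_smul, ← hv, Finset.sum_range_succ _ (n + 1), add_smul, smul_eq_mul]
        abel

theorem localSpecRad_single_zero_le_of_hasSum_ne_zero (hS : IsWeightedShift A S)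
    (hv : ∀ n, v (n + 1) = A n (v n)) (hy : ∀ n, y n = a n • v n) {m F : ℂ} {g : lp E p}
    (hg : S g - m • g = y) (hF : HasSum (fun k => m ^ k • a k) F) (hF0 : F ≠ 0) :
    localSpecRad S (lp.single p 0 (v 0)) ≤ ‖m‖₊ := by
  have hpos : 0 < ‖F‖ := norm_pos_iff.2 hF0
  have hpartial := (hF.tendsto_sum_nat.comp (tendsto_add_atTop_nat 1)).norm
  refine localSpecRad_le_of_eventually_norm_pow_apply_le (C := ‖m‖ * ‖g‖ / (‖F‖ / 2)) ?_
  filter_upwards [hpartial.eventually (lt_mem_nhds (half_lt_self hpos))] with n hn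
  rw [hS.norm_pow_apply_single_zero hv, coe_nnnorm, div_mul_eq_mul_div,
    le_div_iff₀ (half_pos hpos)]
  calc ‖v n‖ * (‖F‖ / 2) ≤ ‖v n‖ * ‖∑ k ∈ Finset.range (n + 1), m ^ k • a k‖ := by
        gcongr
        exact hn.le
    _ = ‖m ^ (n + 1) • g n‖ := by
        rw [hS.pow_succ_smul_apply_eq hv hy hg, norm_neg, norm_smul, mul_comm]
    _ ≤ ‖m‖ ^ (n + 1) * ‖g‖ := by
        rw [norm_smul, norm_pow]
        gcongr
        exact lp.norm_apply_le_norm (zero_lt_one.trans_le Fact.out).ne' g n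
    _ = ‖m‖ * ‖g‖ * ‖m‖ ^ n := by ring

theorem mem_localSpectrum_of_nnnorm_le [∀ n, CompleteSpace (E n)] (hS : IsWeightedShift A S)
    (hv : ∀ n, v (n + 1) = A n (v n)) (hy : ∀ n, y n = a n • v n) (hy0 : y ≠ 0)
    (hr : localSpecRad S (lp.single p 0 (v 0)) < (generatingSeries ℂ a).radius) {l : ℂ}
    (hl : ‖l‖₊ ≤ localSpecRad S (lp.single p 0 (v 0))) : l ∈ localSpectrum S y := by
  set r := localSpecRad S (lp.single p 0 (v 0))
  obtain hr0 | hr0 := eq_or_ne r 0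
  · obtain rfl : l = 0 := by simpa [hr0] using hl
    exact hS.zero_mem_localSpectrum hy0
  rintro ⟨U, hU, hlU, f, -, hf⟩
  have hV : IsOpen (U ∩ Metric.eball 0 r) := hU.inter Metric.isOpen_eball
  have hne : (U ∩ Metric.eball 0 r).Nonempty :=
    mem_closure_iff.1 (mem_closure_eball_zero hr0 hl) U hU hlU
  have ha : a = 0 := by
    refine eq_zero_of_generatingSeries_sum_eqOn_zero (𝕜 := ℂ) hV hne
      (Set.inter_subset_right.trans (Metric.eball_subset_eball hr.le)) fun m ⟨hmU, hmr⟩ => ?_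
    by_contra hF0
    have hF := generatingSeries_hasSum a (Metric.eball_subset_eball hr.le hmr)
    rw [Metric.mem_eball, edist_zero_right] at hmr
    exact hmr.not_ge (hS.localSpecRad_single_zero_le_of_hasSum_ne_zero hv hy (hf m hmU) hF hF0)
  refine hy0 (lp.ext (funext fun n => ?_))
  rw [hy, ha, Pi.zero_apply, zero_smul]
  rfl

end IsWeightedShift

theorem stmt16_general [∀ n, CompleteSpace (E n)] (hS : IsWeightedShift A S) {v : ∀ n, E n}
    (hv : ∀ n, v (n + 1) = A n (v n)) {a : ℕ → ℂ} {y : lp E p} (hy : ∀ n, y n = a n • v n)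
    (hy0 : y ≠ 0)
    (hr : localSpecRad S (lp.single p 0 (v 0)) < (generatingSeries ℂ a).radius) :
    localSpectrum S y = {l : ℂ | (‖l‖₊ : ℝ≥0∞) ≤ localSpecRad S (lp.single p 0 (v 0))} := by
  refine Set.Subset.antisymm (fun l hl => ?_)
    fun l hl => hS.mem_localSpectrum_of_nnnorm_le hv hy hy0 hr hl
  have hle := localSpecRad_le_of_hasSum_smul_pow_apply hr
    (hS.hasSum_smul_pow_apply_single_zero hv hy hr)
  exact (le_of_not_gt fun hlt => hl (mem_localResolventSet_of_localSpecRad_lt hlt)).trans hle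

theorem exists_apply_eq_smul_of_mem_topologicalClosure_span_single {v : ∀ n, E n} {y : lp E p}
    (hy : y ∈ (Submodule.span ℂ
      (Set.range fun n => lp.single p n (v n))).topologicalClosure) :
    ∃ a : ℕ → ℂ, ∀ n, y n = a n • v n := by
  have hmem : ∀ n, y n ∈ ℂ ∙ v n := fun n => by
    have hspan : Submodule.span ℂ (Set.range fun n => lp.single p n (v n)) ≤
        (ℂ ∙ v n).comap (lp.evalCLM ℂ E p n).toLinearMap := by
      rw [Submodule.span_le]
      rintro _ ⟨k, rfl⟩
      obtain rfl | hkn := eq_or_ne n k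
      · change lp.single p n (v n) n ∈ ℂ ∙ v n
        rw [lp.single_apply_self]
        exact Submodule.mem_span_singleton_self (v n)
      · change lp.single p k (v k) n ∈ ℂ ∙ v n
        rw [lp.single_apply_ne _ _ _ hkn]
        exact zero_mem _
    have hclosed : IsClosed
        ((ℂ ∙ v n).comap (lp.evalCLM ℂ E p n).toLinearMap : Set (lp E p)) :=
      (Submodule.closed_of_finiteDimensional (ℂ ∙ v n)).preimage (lp.evalCLM ℂ E p n).continuous
    exact Submodule.topologicalClosure_minimal _ hspan hclosed hy
  choose a ha using fun n => Submodule.mem_span_singleton.1 (hmem n)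
  exact ⟨a, fun n => (ha n).symm⟩

end WeightedShift

theorem RA_eq_generatingSeries_radius {H : Type*} [NormedAddCommGroup H] [InnerProductSpace ℂ H]
    {A : ℕ → (H →L[ℂ] H)ˣ} {x : H} (hx : x ≠ 0) {a : ℕ → ℂ} {y : lp (fun _ : ℕ => H) 2}
    (hy : ∀ n, y n = a n • (wB A n : H →L[ℂ] H) x) :
    RA A y = (generatingSeries ℂ a).radius := by
  have hcoord : ∀ n, wBi A n (y n) = a n • x := fun n => by
    rw [hy, map_smul, wBi, ← mul_apply_eq_comp, Units.inv_mul, one_apply_eq_self]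
  simp_rw [RA, hcoord, ← generatingSeries_radius_inv (𝕜 := ℂ) fun n => a n • x, inv_inv,
    generatingSeries_radius_smul_const a hx]

theorem stmt16 {H : Type*} [NormedAddCommGroup H] [InnerProductSpace ℂ H] [CompleteSpace H]
    (A : ℕ → (H →L[ℂ] H)ˣ)
    (hbdd : ∃ C : ℝ, ∀ n, ‖(A n : H →L[ℂ] H)‖ ≤ C)
    (S : lp (fun _ : ℕ => H) 2 →L[ℂ] lp (fun _ : ℕ => H) 2)
    (hS0 : ∀ x : lp (fun _ : ℕ => H) 2, S x 0 = 0)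
    (hS : ∀ (x : lp (fun _ : ℕ => H) 2) (n : ℕ), S x (n + 1) = (A n : H →L[ℂ] H) (x n))
    (x : H) (hx : x ≠ 0) (y : lp (fun _ : ℕ => H) 2) (hy0 : y ≠ 0)
    (hy : y ∈ (Submodule.span ℂ
      (Set.range fun n : ℕ => lp.single 2 n ((wB A n : H →L[ℂ] H) x))).topologicalClosure)
    (hR : localSpecRad S (lp.single 2 0 x) < RA A y) :
    localSpectrum S y = {l : ℂ | (‖l‖₊ : ℝ≥0∞) ≤ localSpecRad S (lp.single 2 0 x)} := by
  obtain ⟨a, ha⟩ := exists_apply_eq_smul_of_mem_topologicalClosure_span_single hy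
  exact stmt16_general (A := fun n => (A n : H →L[ℂ] H)) ⟨hS0, hS⟩
    (v := fun n => (wB A n : H →L[ℂ] H) x) (fun _ => rfl) ha hy0
    (RA_eq_generatingSeries_radius hx ha ▸ hR)
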